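/- arXiv:2206.00185 — 3 statements merged into one kernel-verified Lean document; each statement's English description precedes it below -/
import Mathlib

section
/- Let n ≥ 2 and let K ⊆ ℝⁿ be a bounded measurable set. Then V(K^◇◇) ≥ V(K), where K^◇◇ = (K^◇)^◇. Moreover, if K is a star body (star-shaped about the origin with radial function positive and continuous on S^{n-1}), then equality holds if and only if K = K^◇◇. -/
/-!
The inclusion `K ⊆ K^◇◇` follows from the symmetry of `[x,y]`, and gives the volume inequality.

For fixed `y`, the function `x ↦ [x,y]` is a seminorm: it is the norm of the linear map
`x ↦ ‖y‖ x - (⟪x,y⟫ / ‖y‖) y` (`sinePair_eq_norm`). Hence every sine polar body is convex.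
A star body `K` is closed and contains a ball about the origin, so `K^◇◇` is a convex set with
nonempty interior, and each of its points is a limit of interior points. A point of `K^◇◇ \ K`
would thus produce a nonempty open subset of `K^◇◇ \ K`, which is impossible when the two
(finite) volumes agree.
-/

open MeasureTheory Metric Set
open scoped RealInnerProductSpace ENNReal

noncomputable section

/-- `[x,y]`: the area of the parallelogram spanned by `x` and `y`. -/
def sinePair {n : ℕ} (x y : EuclideanSpace ℝ (Fin n)) : ℝ :=
  Real.sqrt (‖x‖ ^ 2 * ‖y‖ ^ 2 - ⟪x, y⟫ ^ 2)

/-- `ω_q = π^{q/2}/Γ(1+q/2)`. -/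
def omegaVol (q : ℝ) : ℝ := Real.pi ^ (q / 2) / Real.Gamma (1 + q / 2)

/-- The rotation invariant probability measure on the unit sphere `S^{n-1}`. -/
def sphereProb (n : ℕ) : Measure (sphere (0 : EuclideanSpace ℝ (Fin n)) 1) :=
  ((volume : Measure (EuclideanSpace ℝ (Fin n))).toSphere univ)⁻¹ •
    (volume : Measure (EuclideanSpace ℝ (Fin n))).toSphere

/-- The radial function of a set star-shaped about the origin. -/
def radialFn {n : ℕ} (K : Set (EuclideanSpace ℝ (Fin n))) (u : EuclideanSpace ℝ (Fin n)) : ℝ :=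
  sSup {r : ℝ | 0 ≤ r ∧ r • u ∈ K}

/-- `K` is star-shaped about the origin. -/
def IsStarShaped {n : ℕ} (K : Set (EuclideanSpace ℝ (Fin n))) : Prop :=
  0 ∈ K ∧ ∀ x ∈ K, ∀ t : ℝ, 0 ≤ t → t ≤ 1 → t • x ∈ K

/-- `K` is a star body: star-shaped about the origin, with radial function positive and
continuous on the unit sphere, and `K = {r • u : u ∈ S^{n-1}, 0 ≤ r ≤ ρ_K(u)}`. -/
def IsStarBody {n : ℕ} (K : Set (EuclideanSpace ℝ (Fin n))) : Prop :=
  IsStarShaped K ∧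
  (∀ u ∈ sphere (0 : EuclideanSpace ℝ (Fin n)) 1, 0 < radialFn K u) ∧
  ContinuousOn (radialFn K) (sphere (0 : EuclideanSpace ℝ (Fin n)) 1) ∧
  ∀ u ∈ sphere (0 : EuclideanSpace ℝ (Fin n)) 1, ∀ r : ℝ, 0 ≤ r →
    (r • u ∈ K ↔ r ≤ radialFn K u)

/-- The constant `c̃_{n,p}`. -/
def tildeC (n : ℕ) (p : ℝ) : ℝ :=
  ((n : ℝ) - 1) * omegaVol ((n : ℝ) - 1) * omegaVol ((n : ℝ) + p - 2) /
    (((n : ℝ) + p) * omegaVol (n : ℝ) * omegaVol ((n : ℝ) + p - 3))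

/-- The polar body `Λ_p°K` of the `L_p`-sine centroid body of `K`. -/
def sineCentroidPolar (n : ℕ) (p : ℝ) (K : Set (EuclideanSpace ℝ (Fin n))) :
    Set (EuclideanSpace ℝ (Fin n)) :=
  {x | ∫ y in K, sinePair x y ^ p ≤ tildeC n p * (volume K).toReal}

/-- The sine polar body `K^◇`. -/
def sinePolar {n : ℕ} (K : Set (EuclideanSpace ℝ (Fin n))) : Set (EuclideanSpace ℝ (Fin n)) :=
  {x | ∀ y ∈ K, sinePair x y ≤ 1}

/-- The closed solid cylinder `C⁻(u,r)`. -/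
def solidCylinder {n : ℕ} (u : EuclideanSpace ℝ (Fin n)) (r : ℝ) :
    Set (EuclideanSpace ℝ (Fin n)) := {x | sinePair x u ≤ r}

/-- `K ∈ C_e^n`: an origin-symmetric convex body that is an intersection of closed solid
cylinders. -/
def IsCylBody {n : ℕ} (K : Set (EuclideanSpace ℝ (Fin n))) : Prop :=
  IsCompact K ∧ Convex ℝ K ∧ (interior K).Nonempty ∧ (∀ x ∈ K, -x ∈ K) ∧
  ∃ I : Set (EuclideanSpace ℝ (Fin n) × ℝ),
    (∀ c ∈ I, c.1 ∈ sphere (0 : EuclideanSpace ℝ (Fin n)) 1 ∧ 0 < c.2) ∧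
    K = ⋂ c ∈ I, solidCylinder c.1 c.2

/-- The cylindrical hull of a set. -/
def cylHull {n : ℕ} (E : Set (EuclideanSpace ℝ (Fin n))) : Set (EuclideanSpace ℝ (Fin n)) :=
  ⋂ c ∈ {c : EuclideanSpace ℝ (Fin n) × ℝ |
      c.1 ∈ sphere (0 : EuclideanSpace ℝ (Fin n)) 1 ∧ 0 < c.2 ∧ E ⊆ solidCylinder c.1 c.2},
    solidCylinder c.1 c.2

/-- The cylindrical support function `c_K`. -/
def cylSupport {n : ℕ} (K : Set (EuclideanSpace ℝ (Fin n))) (x : EuclideanSpace ℝ (Fin n)) : ℝ :=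
  sSup ((fun y => sinePair x y) '' K)

/-- The support function `h_K`. -/
def suppFn {n : ℕ} (K : Set (EuclideanSpace ℝ (Fin n))) (x : EuclideanSpace ℝ (Fin n)) : ℝ :=
  sSup ((fun y => ⟪x, y⟫) '' K)

theorem sinePair_comm {n : ℕ} (x y : EuclideanSpace ℝ (Fin n)) :
    sinePair x y = sinePair y x := by
  unfold sinePair
  rw [real_inner_comm, mul_comm]

/-- `[x,y]` is `‖y‖` times the distance from `x` to the line spanned by `y`. For `y = 0` both
sides vanish, by the convention for division by zero. -/
theorem sinePair_eq_norm {n : ℕ} (x y : EuclideanSpace ℝ (Fin n)) :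
    sinePair x y = ‖‖y‖ • x - (⟪x, y⟫ / ‖y‖) • y‖ := by
  unfold sinePair
  rw [← Real.sqrt_sq (norm_nonneg (‖y‖ • x - (⟪x, y⟫ / ‖y‖) • y))]
  congr 1
  rw [norm_sub_sq_real, norm_smul, norm_smul, real_inner_smul_left, real_inner_smul_right,
    mul_pow, mul_pow, norm_norm, Real.norm_eq_abs, sq_abs]
  by_cases hy : ‖y‖ = 0
  · simp [norm_eq_zero.1 hy]
  · field_simp
    ring

theorem subset_sinePolar_sinePolar {n : ℕ} (K : Set (EuclideanSpace ℝ (Fin n))) :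
    K ⊆ sinePolar (sinePolar K) := by
  intro x hx y hy
  rw [sinePair_comm]
  exact hy x hx

theorem convex_sinePolar {n : ℕ} (K : Set (EuclideanSpace ℝ (Fin n))) :
    Convex ℝ (sinePolar K) := by
  intro x hx z hz a b ha hb hab y hy
  have h1 := hx y hy
  have h2 := hz y hy
  rw [sinePair_eq_norm] at h1 h2 ⊢
  have key : ‖y‖ • (a • x + b • z) - (⟪a • x + b • z, y⟫ / ‖y‖) • y
      = a • (‖y‖ • x - (⟪x, y⟫ / ‖y‖) • y) + b • (‖y‖ • z - (⟪z, y⟫ / ‖y‖) • y) := by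
    rw [inner_add_left, real_inner_smul_left, real_inner_smul_left]
    module
  rw [key]
  refine (norm_add_le _ _).trans ?_
  rw [norm_smul, norm_smul, Real.norm_of_nonneg ha, Real.norm_of_nonneg hb]
  nlinarith

theorem IsStarBody.mem_iff {n : ℕ} {K : Set (EuclideanSpace ℝ (Fin n))} (h : IsStarBody K)
    {x : EuclideanSpace ℝ (Fin n)} (hx : x ≠ 0) :
    x ∈ K ↔ ‖x‖ ≤ radialFn K (‖x‖⁻¹ • x) := by
  have hx' : ‖x‖ ≠ 0 := norm_ne_zero_iff.2 hx
  have hu : ‖x‖⁻¹ • x ∈ sphere (0 : EuclideanSpace ℝ (Fin n)) 1 := by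
    rw [mem_sphere_zero_iff_norm, norm_smul, norm_inv, norm_norm, inv_mul_cancel₀ hx']
  have := h.2.2.2 _ hu ‖x‖ (norm_nonneg x)
  rwa [smul_smul, mul_inv_cancel₀ hx', one_smul] at this

theorem IsStarBody.isClosed {n : ℕ} {K : Set (EuclideanSpace ℝ (Fin n))} (h : IsStarBody K) :
    IsClosed K := by
  have hcomp : Kᶜ = {0}ᶜ ∩ (fun x => radialFn K (‖x‖⁻¹ • x) - ‖x‖) ⁻¹' Iio 0 := by
    ext x
    by_cases hx : x = 0
    · subst hx
      simp [h.1.1]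
    · simp [hx, h.mem_iff hx]
  rw [← isOpen_compl_iff, hcomp]
  refine ContinuousOn.isOpen_inter_preimage ?_ isOpen_compl_singleton isOpen_Iio
  refine ContinuousOn.sub ?_ continuous_norm.continuousOn
  refine h.2.2.1.comp (f := fun x => ‖x‖⁻¹ • x) ?_ ?_
  · refine ContinuousOn.smul (f := fun x => ‖x‖⁻¹) (g := fun x => x) ?_ continuousOn_id
    exact ContinuousOn.inv₀ continuous_norm.continuousOn fun x hx => norm_ne_zero_iff.2 hx
  · intro x hx
    rw [mem_sphere_zero_iff_norm, norm_smul, norm_inv, norm_norm,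
      inv_mul_cancel₀ (norm_ne_zero_iff.2 hx)]

theorem IsStarBody.interior_nonempty {n : ℕ} (hn : 2 ≤ n)
    {K : Set (EuclideanSpace ℝ (Fin n))} (h : IsStarBody K) : (interior K).Nonempty := by
  have : Nonempty (Fin n) := ⟨⟨0, by omega⟩⟩
  have hne : (sphere (0 : EuclideanSpace ℝ (Fin n)) 1).Nonempty :=
    NormedSpace.sphere_nonempty.2 zero_le_one
  obtain ⟨u, hu, hmin⟩ := (isCompact_sphere _ _).exists_isMinOn hne h.2.2.1
  refine ⟨0, mem_interior.2 ⟨ball 0 (radialFn K u), ?_, isOpen_ball, mem_ball_self (h.2.1 u hu)⟩⟩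
  intro x hx
  by_cases hx0 : x = 0
  · rw [hx0]
    exact h.1.1
  · rw [h.mem_iff hx0]
    have hxs : ‖x‖⁻¹ • x ∈ sphere (0 : EuclideanSpace ℝ (Fin n)) 1 := by
      rw [mem_sphere_zero_iff_norm, norm_smul, norm_inv, norm_norm,
        inv_mul_cancel₀ (norm_ne_zero_iff.2 hx0)]
    exact (mem_ball_zero_iff.1 hx).le.trans (hmin hxs)

/-- `V(K^◇◇) ≥ V(K)`, with equality iff `K = K^◇◇` when `K` is a star body. -/
theorem volume_double_sinePolar {n : ℕ} (hn : 2 ≤ n)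
    {K : Set (EuclideanSpace ℝ (Fin n))} (hb : Bornology.IsBounded K) (hK : MeasurableSet K) :
    volume K ≤ volume (sinePolar (sinePolar K)) ∧
    (IsStarBody K →
      (volume (sinePolar (sinePolar K)) = volume K ↔ K = sinePolar (sinePolar K))) := by
  have hsub := subset_sinePolar_sinePolar K
  refine ⟨measure_mono hsub, fun h => ⟨fun hV => ?_, fun hE => by rw [← hE]⟩⟩
  refine hsub.antisymm ?_
  by_contra hnot
  obtain ⟨x, hxL, hxK⟩ := not_subset.1 hnot
  have hint : (interior (sinePolar (sinePolar K))).Nonempty :=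
    (h.interior_nonempty hn).mono (interior_mono hsub)
  have hxcl : x ∈ closure (interior (sinePolar (sinePolar K))) := by
    rw [(convex_sinePolar _).closure_interior_eq_closure_of_nonempty_interior hint]
    exact subset_closure hxL
  have hne := mem_closure_iff.1 hxcl Kᶜ h.isClosed.isOpen_compl hxK
  have hpos := (h.isClosed.isOpen_compl.inter isOpen_interior).measure_pos volume hne
  have hzero : volume (sinePolar (sinePolar K) \ K) = 0 := by
    rw [measure_sdiff hsub hK.nullMeasurableSet hb.measure_lt_top.ne, hV, tsub_self]
  refine hpos.ne' (measure_mono_null ?_ hzero)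
  exact fun z hz => ⟨interior_subset hz.2, hz.1⟩
end
end

section
/- Let n ≥ 2 and K ⊆ ℝⁿ. Then K ⊆ K^◇◇, where K^◇◇ = (K^◇)^◇. Moreover, if K ∈ C_e^n, then K = K^◇◇. -/
/-!
The pairing `[x, y]` is symmetric, which gives `K ⊆ K^◇◇` at once. It is also absolutely homogeneous
in each argument, so a cylinder `C⁻(u, r)` with `r > 0` containing `K` says exactly that
`r⁻¹ • u ∈ K^◇`. Every point of `K^◇◇` therefore satisfies `[x, r⁻¹ • u] ≤ 1`, that is, lies in
`C⁻(u, r)`; a set that is an intersection of such cylinders thus contains its double sine polar.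
-/

open MeasureTheory Metric Set
open scoped RealInnerProductSpace ENNReal

noncomputable section

theorem sinePair_smul_right {n : ℕ} (x y : EuclideanSpace ℝ (Fin n)) {t : ℝ} (ht : 0 ≤ t) :
    sinePair x (t • y) = t * sinePair x y := by
  unfold sinePair
  rw [norm_smul, inner_smul_right, Real.norm_of_nonneg ht,
    show ‖x‖ ^ 2 * (t * ‖y‖) ^ 2 - (t * ⟪x, y⟫) ^ 2
      = t ^ 2 * (‖x‖ ^ 2 * ‖y‖ ^ 2 - ⟪x, y⟫ ^ 2) by ring,
    Real.sqrt_mul (sq_nonneg t), Real.sqrt_sq ht]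

theorem sinePair_inv_smul_le_one_iff {n : ℕ} (x u : EuclideanSpace ℝ (Fin n)) {r : ℝ}
    (hr : 0 < r) : sinePair x (r⁻¹ • u) ≤ 1 ↔ x ∈ solidCylinder u r := by
  rw [sinePair_smul_right x u (inv_nonneg.2 hr.le), inv_mul_le_one₀ hr]
  rfl

/-- `K ⊆ K^◇◇`, with equality for `K ∈ C_e^n`. -/
theorem subset_double_sinePolar {n : ℕ} (hn : 2 ≤ n) (K : Set (EuclideanSpace ℝ (Fin n))) :
    K ⊆ sinePolar (sinePolar K) ∧ (IsCylBody K → K = sinePolar (sinePolar K)) := by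
  refine ⟨subset_sinePolar_sinePolar K, ?_⟩
  rintro ⟨-, -, -, -, I, hI, hK⟩
  refine (subset_sinePolar_sinePolar K).antisymm fun x hx => ?_
  rw [hK]
  refine mem_iInter₂.2 fun c hc => ?_
  have hr := (hI c hc).2
  refine (sinePair_inv_smul_le_one_iff x c.1 hr).1 (hx _ fun y hy => ?_)
  rw [sinePair_comm, sinePair_inv_smul_le_one_iff y c.1 hr]
  rw [hK] at hy
  exact mem_iInter₂.1 hy c hc
end
end

section
/- Let n ≥ 2 and K ∈ C_e^n. Then V(K^◇) ≤ V(K°), where K^◇ is the sine polar body of K and K° = {x ∈ ℝⁿ : x·y ≤ 1 for all y ∈ K} is the (classical) polar body of K. -/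
/-!
For any `x` and any `v ⟂ x` with `|v| = |x|`, Bessel's inequality gives `v·y ≤ [x,y]` for every
`y`, so `x ∈ K^◇` forces `v ∈ K°` (`mem_polarBody_of_mem_sinePolar`). When `n` is odd no single
rotation sends every `x` to an orthogonal vector, so the volumes are compared by averaging over
`O(n)` with its Haar measure. By Tonelli, `V(A)` is proportional to the integral over `x` of the
Haar measure of `{g : g⁻¹ x ∈ A}` (`lintegral_orbitMeasure`), and this last quantity depends only
on `|x|` (`orbitMeasure_apply`). Choosing, separately for each `x`, a vector `v ⟂ x` with
`|v| = |x|`, one has `{g : g⁻¹ x ∈ K^◇} ⊆ {g : g⁻¹ v ∈ K°}`, whence the inequality between the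
orbit averages at `x` (`orbitMeasure_sinePolar_le`), and integrating gives the theorem.
-/

open MeasureTheory Metric Set
open scoped RealInnerProductSpace ENNReal

noncomputable section

/-- The (classical) polar body `K° = {x : x·y ≤ 1 for all y ∈ K}`. -/
def polarBody {n : ℕ} (K : Set (EuclideanSpace ℝ (Fin n))) : Set (EuclideanSpace ℝ (Fin n)) :=
  {x | ∀ y ∈ K, ⟪x, y⟫ ≤ 1}

/-! ### Geometry of the sine pairing -/

theorem continuous_sinePair_left {n : ℕ} (y : EuclideanSpace ℝ (Fin n)) :
    Continuous fun x => sinePair x y := by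
  unfold sinePair
  fun_prop

theorem isClosed_sinePolar {n : ℕ} (K : Set (EuclideanSpace ℝ (Fin n))) :
    IsClosed (sinePolar K) := by
  simp only [sinePolar, ofPred_forall]
  exact isClosed_iInter fun y => isClosed_iInter fun _ =>
    isClosed_le (continuous_sinePair_left y) continuous_const

theorem isClosed_polarBody {n : ℕ} (K : Set (EuclideanSpace ℝ (Fin n))) :
    IsClosed (polarBody K) := by
  simp only [polarBody, ofPred_forall]
  exact isClosed_iInter fun y => isClosed_iInter fun _ =>
    isClosed_le (by fun_prop) continuous_const

/-- If `v ⟂ x` and `|v| = |x|`, then `v·y ≤ [x,y]`: this is Bessel's inequality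
`(x·y)² + (v·y)² ≤ |x|²|y|²`. -/
theorem inner_le_sinePair {n : ℕ} {x v : EuclideanSpace ℝ (Fin n)} (hxv : ⟪x, v⟫ = 0)
    (hnorm : ‖x‖ = ‖v‖) (y : EuclideanSpace ℝ (Fin n)) : ⟪v, y⟫ ≤ sinePair x y := by
  apply Real.le_sqrt_of_sq_le
  set a := ⟪x, y⟫ with ha
  set b := ⟪v, y⟫ with hb
  -- Cauchy–Schwarz for `y` and `w := a x + b v`, where `w·y = a² + b²` and
  -- `|w|² = |x|² (a² + b²)`.
  have hwy : ⟪a • x + b • v, y⟫ = a ^ 2 + b ^ 2 := by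
    rw [inner_add_left, real_inner_smul_left, real_inner_smul_left, ← ha, ← hb]
    ring
  have hww : ‖a • x + b • v‖ ^ 2 = ‖x‖ ^ 2 * (a ^ 2 + b ^ 2) := by
    rw [norm_add_sq_real, real_inner_smul_left, real_inner_smul_right, hxv, norm_smul, norm_smul,
      mul_pow, mul_pow, Real.norm_eq_abs, Real.norm_eq_abs, sq_abs, sq_abs, ← hnorm]
    ring
  have hcs := abs_real_inner_le_norm (a • x + b • v) y
  have hsq : (a ^ 2 + b ^ 2) ^ 2 ≤ ‖x‖ ^ 2 * (a ^ 2 + b ^ 2) * ‖y‖ ^ 2 := by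
    rw [← hwy, ← sq_abs, hwy, ← hww, ← mul_pow, ← hwy]
    exact pow_le_pow_left₀ (abs_nonneg _) hcs 2
  rcases (by positivity : 0 ≤ a ^ 2 + b ^ 2).eq_or_lt with h0 | hpos
  · nlinarith [sq_nonneg a, sq_nonneg b, mul_nonneg (sq_nonneg ‖x‖) (sq_nonneg ‖y‖)]
  · have : a ^ 2 + b ^ 2 ≤ ‖x‖ ^ 2 * ‖y‖ ^ 2 := by
      refine le_of_mul_le_mul_right ?_ hpos
      nlinarith
    linarith

theorem mem_polarBody_of_mem_sinePolar {n : ℕ} {K : Set (EuclideanSpace ℝ (Fin n))}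
    {x v : EuclideanSpace ℝ (Fin n)} (hx : x ∈ sinePolar K) (hxv : ⟪x, v⟫ = 0)
    (hnorm : ‖x‖ = ‖v‖) : v ∈ polarBody K :=
  fun y hy => (inner_le_sinePair hxv hnorm y).trans (hx y hy)

theorem exists_orthogonal_norm_eq {n : ℕ} (hn : 2 ≤ n) (x : EuclideanSpace ℝ (Fin n)) :
    ∃ v : EuclideanSpace ℝ (Fin n), ⟪x, v⟫ = 0 ∧ ‖x‖ = ‖v‖ := by
  have hne : (ℝ ∙ x)ᗮ ≠ ⊥ := by
    intro hbot
    have hsum := Submodule.finrank_add_finrank_orthogonal (ℝ ∙ x)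
    have hle : Module.finrank ℝ (ℝ ∙ x) ≤ 1 := by
      simpa using finrank_span_le_card (R := ℝ) ({x} : Set (EuclideanSpace ℝ (Fin n)))
    rw [hbot, finrank_bot, finrank_euclideanSpace_fin] at hsum
    omega
  obtain ⟨w, hw, hw0⟩ := Submodule.exists_mem_ne_zero_of_ne_bot hne
  rw [Submodule.mem_orthogonal_singleton_iff_inner_right] at hw
  refine ⟨(‖x‖ / ‖w‖) • w, by rw [real_inner_smul_right, hw, mul_zero], ?_⟩
  rw [norm_smul, norm_div, norm_norm, norm_norm, div_mul_cancel₀ _ (norm_ne_zero_iff.2 hw0)]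

/-! ### Averaging over the orthogonal group -/

/-- The orthogonal group `O(n)`, as the group of unitary operators on `ℝⁿ`. -/
abbrev OrthGroup (n : ℕ) : Type :=
  unitary (EuclideanSpace ℝ (Fin n) →L[ℝ] EuclideanSpace ℝ (Fin n))

instance instContinuousStarOrth (n : ℕ) :
    ContinuousStar (EuclideanSpace ℝ (Fin n) →L[ℝ] EuclideanSpace ℝ (Fin n)) :=
  ⟨(ContinuousLinearMap.adjoint
    (𝕜 := ℝ) (E := EuclideanSpace ℝ (Fin n)) (F := EuclideanSpace ℝ (Fin n))).continuous⟩

instance instCompactSpaceOrthGroup (n : ℕ) : CompactSpace (OrthGroup n) := by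
  have : ProperSpace (EuclideanSpace ℝ (Fin n) →L[ℝ] EuclideanSpace ℝ (Fin n)) :=
    FiniteDimensional.proper ℝ _
  refine isCompact_iff_compactSpace.1 (Metric.isCompact_of_isClosed_isBounded isClosed_unitary ?_)
  refine (isBounded_iff_forall_norm_le).2 ⟨1, fun u hu => ?_⟩
  refine ContinuousLinearMap.opNorm_le_bound _ zero_le_one fun x => ?_
  rw [Unitary.norm_map ⟨u, hu⟩ x, one_mul]

theorem exists_orthGroup_apply_eq {n : ℕ} {x v : EuclideanSpace ℝ (Fin n)} (h : ‖x‖ = ‖v‖) :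
    ∃ g : OrthGroup n, g.1 x = v := by
  refine ⟨Unitary.linearIsometryEquiv.symm (ℝ ∙ (x - v))ᗮ.reflection, ?_⟩
  rw [Unitary.coe_symm_linearIsometryEquiv_apply]
  exact Submodule.reflection_sub h

theorem volume_preimage_orthGroup {n : ℕ} (g : OrthGroup n) (A : Set (EuclideanSpace ℝ (Fin n))) :
    volume ((fun x => g.1 x) ⁻¹' A) = volume A := by
  exact (Unitary.linearIsometryEquiv g).measurePreserving.measure_preimage_equiv
    (f := (Unitary.linearIsometryEquiv g).toMeasurableEquiv) A

/-- The Haar measure of `{g ∈ O(n) : g⁻¹ x ∈ A}`. -/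
def orbitMeasure {n : ℕ} (A : Set (EuclideanSpace ℝ (Fin n))) (x : EuclideanSpace ℝ (Fin n)) :
    ℝ≥0∞ :=
  Measure.haar {g : OrthGroup n | (g⁻¹).1 x ∈ A}

theorem continuous_inv_apply (n : ℕ) :
    Continuous fun p : OrthGroup n × EuclideanSpace ℝ (Fin n) => (p.1⁻¹).1 p.2 :=
  (continuous_subtype_val.comp (continuous_inv.comp continuous_fst)).clm_apply continuous_snd

/-- `V(A)` is, up to the total mass of `O(n)`, the integral of the orbit averages of `A`:
Tonelli, and invariance of Lebesgue measure under `O(n)`. -/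
theorem lintegral_orbitMeasure {n : ℕ} {A : Set (EuclideanSpace ℝ (Fin n))}
    (hA : MeasurableSet A) :
    ∫⁻ x, orbitMeasure A x = (Measure.haar : Measure (OrthGroup n)) univ * volume A := by
  have hS : MeasurableSet {p : OrthGroup n × EuclideanSpace ℝ (Fin n) | (p.1⁻¹).1 p.2 ∈ A} :=
    (continuous_inv_apply n).measurable hA
  have h1 := Measure.prod_apply (μ := (Measure.haar : Measure (OrthGroup n)))
    (ν := (volume : Measure (EuclideanSpace ℝ (Fin n)))) hS
  have h2 := Measure.prod_apply_symm (μ := (Measure.haar : Measure (OrthGroup n)))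
    (ν := (volume : Measure (EuclideanSpace ℝ (Fin n)))) hS
  refine (h2.symm.trans h1).trans ?_
  have h3 : ∀ g : OrthGroup n, volume (Prod.mk g ⁻¹'
      {p : OrthGroup n × EuclideanSpace ℝ (Fin n) | (p.1⁻¹).1 p.2 ∈ A}) = volume A :=
    fun g => volume_preimage_orthGroup g⁻¹ A
  rw [lintegral_congr h3, lintegral_const, mul_comm]

/-- Left invariance of Haar measure makes orbit averages `O(n)`-invariant in `x`; as `O(n)` is
transitive on spheres (`exists_orthGroup_apply_eq`), they depend on `x` only through `|x|`. -/
theorem orbitMeasure_apply {n : ℕ} (A : Set (EuclideanSpace ℝ (Fin n)))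
    (h : OrthGroup n) (x : EuclideanSpace ℝ (Fin n)) :
    orbitMeasure A (h.1 x) = orbitMeasure A x := by
  have key := measure_preimage_mul (Measure.haar : Measure (OrthGroup n)) h⁻¹
    {g : OrthGroup n | (g⁻¹).1 x ∈ A}
  rw [orbitMeasure, orbitMeasure, ← key]
  congr 1
  ext g
  simp [mul_inv_rev]

theorem orbitMeasure_sinePolar_le {n : ℕ} (hn : 2 ≤ n) (K : Set (EuclideanSpace ℝ (Fin n)))
    (x : EuclideanSpace ℝ (Fin n)) :
    orbitMeasure (sinePolar K) x ≤ orbitMeasure (polarBody K) x := by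
  obtain ⟨v, hxv, hnorm⟩ := exists_orthogonal_norm_eq hn x
  obtain ⟨h, rfl⟩ := exists_orthGroup_apply_eq hnorm
  rw [← orbitMeasure_apply (polarBody K) h x]
  refine measure_mono fun g hg => mem_polarBody_of_mem_sinePolar hg ?_ ?_
  · have := (Unitary.linearIsometryEquiv g⁻¹).inner_map_map x (h.1 x)
    exact this.trans hxv
  · rw [Unitary.norm_map, Unitary.norm_map, Unitary.norm_map]

/-- `V(K^◇) ≤ V(K°)` for `K ∈ C_e^n`. -/
theorem volume_sinePolar_le_volume_polar {n : ℕ} (hn : 2 ≤ n)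
    {K : Set (EuclideanSpace ℝ (Fin n))} (hK : IsCylBody K) :
    volume (sinePolar K) ≤ volume (polarBody K) := by
  have hmono : ∫⁻ x, orbitMeasure (sinePolar K) x ≤ ∫⁻ x, orbitMeasure (polarBody K) x :=
    lintegral_mono (orbitMeasure_sinePolar_le hn K)
  rw [lintegral_orbitMeasure (isClosed_sinePolar K).measurableSet,
    lintegral_orbitMeasure (isClosed_polarBody K).measurableSet] at hmono
  have hpos : (Measure.haar : Measure (OrthGroup n)) univ ≠ 0 :=
    NeZero.ne _
  exact (ENNReal.mul_le_mul_iff_right hpos (measure_ne_top _ _)).1 hmono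
end
end
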